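/- Let O be an n×n real orthogonal matrix and let K = {Ox : x ∈ ℝⁿ, xᵢ ≥ 0 for all i} be the image of the nonnegative orthant under O, a cone in ℝⁿ with the standard inner product. Then for any v, w in the topological interior of K, there exists a symmetric n×n real matrix D acting diffusively with respect to K (i.e., D(K) ⊆ K and ⟨x, Dy⟩ = 0 whenever x, y ∈ K satisfy ⟨x, y⟩ = 0) such that Dv = w. That is, K satisfies Assumption D. -/

import Mathlib

/-!
In the orthonormal basis given by the columns of `O`, the cone is the nonnegative orthant. Write
`v = O a` and `w = O b` with `a, b ≥ 0`. Since `v` is interior, every `a i` is positive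
(`pos_of_mem_interior`), so `D = O * diagonal (b / a) * Oᵀ` is well defined, symmetric and sends
`v` to `w`. It maps the cone to itself because `b / a ≥ 0`. It acts diffusively because two
nonnegative vectors are orthogonal only if their entrywise product vanishes, and scaling entries
preserves this.
-/

open Matrix

/-- An interior point of the cone can be moved a little in the direction `-O eᵢ` without leaving
the cone, so each coordinate `a i` with respect to the columns of `O` is strictly positive. -/
lemma pos_of_mem_interior {n : ℕ} {O : Matrix (Fin n) (Fin n) ℝ} (hO : Oᵀ * O = 1)
    {a : Fin n → ℝ}
    (h : O *ᵥ a ∈ interior {v : Fin n → ℝ | ∃ x : Fin n → ℝ, (∀ i, 0 ≤ x i) ∧ v = O *ᵥ x})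
    (i : Fin n) : 0 < a i := by
  have hc : Continuous fun t : ℝ => O *ᵥ a - t • (O *ᵥ Pi.single i (1 : ℝ)) := by fun_prop
  have hev : ∀ᶠ t in nhds (0 : ℝ), O *ᵥ a - t • (O *ᵥ Pi.single i (1 : ℝ)) ∈
      {v : Fin n → ℝ | ∃ x : Fin n → ℝ, (∀ i, 0 ≤ x i) ∧ v = O *ᵥ x} :=
    hc.continuousAt.eventually_mem (by simpa using mem_interior_iff_mem_nhds.1 h)
  obtain ⟨ε, hε, hball⟩ := Metric.eventually_nhds_iff.1 hev
  obtain ⟨x, hx, hxe⟩ := @hball (ε / 2) (by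
    rw [Real.dist_eq, sub_zero, abs_of_pos (by positivity)]; linarith)
  have hax : a - (ε / 2) • Pi.single i (1 : ℝ) = x := by
    have := congrArg (Oᵀ *ᵥ ·) hxe
    simpa only [mulVec_sub, mulVec_smul, mulVec_mulVec, hO, one_mulVec] using this
  have := hx i
  rw [← hax] at this
  simp at this
  linarith

theorem rotated_orthant_assumptionD {n : ℕ} (O : Matrix (Fin n) (Fin n) ℝ)
    (hO : O ∈ Matrix.orthogonalGroup (Fin n) ℝ)
    (K : Set (Fin n → ℝ))
    (hK : K = {v : Fin n → ℝ | ∃ x : Fin n → ℝ, (∀ i, 0 ≤ x i) ∧ v = O.mulVec x}) :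
    ∀ v ∈ interior K, ∀ w ∈ interior K,
      ∃ D : Matrix (Fin n) (Fin n) ℝ, D.IsSymm ∧
        (∀ x ∈ K, D.mulVec x ∈ K) ∧
        (∀ x ∈ K, ∀ y ∈ K, x ⬝ᵥ y = 0 → x ⬝ᵥ D.mulVec y = 0) ∧
        D.mulVec v = w := by
  subst hK
  intro v hv w hw
  have hO' : Oᵀ * O = 1 := (Matrix.mem_orthogonalGroup_iff' _ _).1 hO
  obtain ⟨a, -, rfl⟩ := interior_subset hv
  obtain ⟨b, hb, rfl⟩ := interior_subset hw
  have ha := pos_of_mem_interior hO' hv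
  have hD : ∀ x, (O * diagonal (fun i => b i / a i) * Oᵀ) *ᵥ (O *ᵥ x) =
      O *ᵥ fun i => b i / a i * x i := by
    intro x
    rw [mulVec_mulVec, Matrix.mul_assoc, hO', Matrix.mul_one, ← mulVec_mulVec]
    congr 1
    ext i
    exact mulVec_diagonal _ _ _
  have hdot : ∀ x y, (O *ᵥ x) ⬝ᵥ (O *ᵥ y) = x ⬝ᵥ y := by
    intro x y
    rw [dotProduct_mulVec, ← mulVec_transpose, mulVec_mulVec, hO', one_mulVec]
  refine ⟨O * diagonal (fun i => b i / a i) * Oᵀ, ?_, ?_, ?_, ?_⟩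
  · simp [Matrix.IsSymm, Matrix.transpose_mul, Matrix.mul_assoc]
  · rintro _ ⟨x, hx, rfl⟩
    exact ⟨_, fun i => mul_nonneg (div_nonneg (hb i) (ha i).le) (hx i), hD x⟩
  · rintro _ ⟨x, hx, rfl⟩ _ ⟨y, hy, rfl⟩ hxy
    rw [hdot] at hxy
    rw [hD, hdot]
    have hz := (Finset.sum_eq_zero_iff_of_nonneg fun i _ => mul_nonneg (hx i) (hy i)).1 hxy
    refine Finset.sum_eq_zero fun i hi => ?_
    rw [mul_left_comm, hz i hi, mul_zero]
  · rw [hD]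
    congr 1
    ext i
    exact div_mul_cancel₀ _ (ha i).ne'
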